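/- Let 𝔥 and ℋ be separable complex Hilbert spaces, (ε_n)_{n∈ℕ} a sequence of real numbers with ε_n → 0, and F_n, F : 𝔥 → trace-class operators on ℋ maps such that for every η ∈ 𝔥 and every compact operator 𝔨 on ℋ one has tr(F_n(η)𝔨) → tr(F(η)𝔨) as n → ∞. Assume each F_n is ε_n-twisted completely positive definite: for every finite collection η_1, …, η_J ∈ 𝔥 and 𝔱_1, …, 𝔱_J ∈ B(ℋ), the operator Σ_{j,k=1}^J 𝔱_j F_n(η_j − η_k) 𝔱_k* e^{i ε_n Im⟨η_j, η_k⟩} is positive on ℋ. Then F is completely positive definite: for every finite collection η_1, …, η_J ∈ 𝔥 and 𝔱_1, …, 𝔱_J ∈ B(ℋ), Σ_{j,k=1}^J 𝔱_j F(η_j − η_k) 𝔱_k* is a positive operator on ℋ. -/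

import Mathlib

noncomputable section
open MeasureTheory Complex
open scoped InnerProductSpace

variable {ℋ : Type*} [NormedAddCommGroup ℋ] [InnerProductSpace ℂ ℋ] [CompleteSpace ℋ]

/-- The trace norm `‖T‖₁ = tr √(T*T)` computed in the Hilbert basis `e`. -/
def traceNorm {ι : Type*} (e : HilbertBasis ι ℂ ℋ) (T : ℋ →L[ℂ] ℋ) : ℝ :=
  ∑' i, (⟪e i, (CFC.sqrt (star T * T)) (e i)⟫_ℂ).re

/-- `T` is trace class: `tr √(T*T) < ∞`. -/
def IsTraceClass {ι : Type*} (e : HilbertBasis ι ℂ ℋ) (T : ℋ →L[ℂ] ℋ) : Prop :=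
  Summable fun i => (⟪e i, (CFC.sqrt (star T * T)) (e i)⟫_ℂ).re

/-- A state-valued measure: a finite Borel measure `μ` on `𝔥` together with a trace-norm
Bochner integrable map `γ` whose values are `μ`-a.e. positive trace-one operators on `ℋ`. -/
def IsStateValuedMeasure {𝔥 : Type*} [NormedAddCommGroup 𝔥] [InnerProductSpace ℂ 𝔥]
    [MeasurableSpace 𝔥] {ι : Type*} (e : HilbertBasis ι ℂ ℋ)
    (μ : Measure 𝔥) (γ : 𝔥 → (ℋ →L[ℂ] ℋ)) : Prop :=
  IsFiniteMeasure μ ∧ Integrable γ μ ∧ Integrable (fun z => traceNorm e (γ z)) μ ∧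
  (∀ᵐ z ∂μ, (γ z).IsPositive) ∧
  (∀ᵐ z ∂μ, HasSum (fun i => (⟪e i, γ z (e i)⟫_ℂ).re) 1)

/-- The Fourier transform `𝔪̂(η) = ∫ e^{2i Re⟨η,z⟩} γ(z) dμ(z)` of a state-valued measure. -/
def svmFourier {𝔥 : Type*} [NormedAddCommGroup 𝔥] [InnerProductSpace ℂ 𝔥]
    [MeasurableSpace 𝔥] (μ : Measure 𝔥) (γ : 𝔥 → (ℋ →L[ℂ] ℋ)) (η : 𝔥) : ℋ →L[ℂ] ℋ :=
  ∫ z, Complex.exp (2 * Complex.I * ((⟪η, z⟫_ℂ).re : ℂ)) • γ z ∂μ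

/-- The trace `tr T = Σ_i ⟨e_i, T e_i⟩` computed in the Hilbert basis `e`. -/
def traceC {ι : Type*} (e : HilbertBasis ι ℂ ℋ) (T : ℋ →L[ℂ] ℋ) : ℂ :=
  ∑' i, ⟪e i, T (e i)⟫_ℂ

/-! Rank-one operators are compact, and testing against them, `tr (T |u⟩⟨v|) = ⟨v, T u⟩`, turns the
convergence of traces into convergence in the weak operator topology. In that topology the
algebra operations in the twisted positivity condition are continuous and the cone of positive
operators is closed, so the condition passes to the limit with phases `e^{i ε_n Im⟨η_j, η_k⟩}`
tending to `1`. -/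

open Filter Topology InnerProductSpace ContinuousLinearMapWOT
open scoped ComplexOrder

theorem isCompactOperator_rankOne {𝕜 E F : Type*} [RCLike 𝕜] [SeminormedAddCommGroup E]
    [NormedSpace 𝕜 E] [SeminormedAddCommGroup F] [InnerProductSpace 𝕜 F] (x : E) (y : F) :
    IsCompactOperator (rankOne 𝕜 x y) :=
  (isCompactOperator_of_locallyCompactSpace_rng (.toSpanSingleton 𝕜 x)).comp_clm (innerSL 𝕜 y)

theorem traceC_mul_rankOne {E ι : Type*} [NormedAddCommGroup E] [InnerProductSpace ℂ E]
    (e : HilbertBasis ι ℂ E) (T : E →L[ℂ] E) (u v : E) :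
    traceC e (T * rankOne ℂ u v) = ⟪v, T u⟫_ℂ := by
  simp only [traceC, ContinuousLinearMap.mul_def, comp_rankOne, inner_right_rankOne_apply]
  simpa only [mul_comm] using e.tsum_inner_mul_inner v (T u)

theorem tendsto_ofCLM_of_tendsto_traceC_mul_compact {ι α : Type*} (e : HilbertBasis ι ℂ ℋ)
    {l : Filter α} {T : α → ℋ →L[ℂ] ℋ} {T₀ : ℋ →L[ℂ] ℋ}
    (h : ∀ K : ℋ →L[ℂ] ℋ, IsCompactOperator K →
      Tendsto (fun n => traceC e (T n * K)) l (𝓝 (traceC e (T₀ * K)))) :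
    Tendsto (fun n => ofCLM (T n)) l (𝓝 (ofCLM T₀)) := by
  refine tendsto_iff_forall_inner_apply_tendsto.2 fun u v => ?_
  simpa only [traceC_mul_rankOne, ofCLM_apply] using
    h (rankOne ℂ u v) (isCompactOperator_rankOne u v)

theorem ofCLM_sum {𝕜₁ 𝕜₂ E F ι : Type*} [NormedField 𝕜₁] [NormedField 𝕜₂] {σ : 𝕜₁ →+* 𝕜₂}
    [AddCommGroup E] [TopologicalSpace E] [Module 𝕜₁ E] [AddCommGroup F] [TopologicalSpace F]
    [Module 𝕜₂ F] [IsTopologicalAddGroup F] (s : Finset ι) (f : ι → E →SL[σ] F) :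
    ofCLM (∑ i ∈ s, f i) = ∑ i ∈ s, ofCLM (f i) :=
  map_sum addEquiv.symm f s

theorem isClosed_setOf_isPositive_toCLM {𝕜 E : Type*} [RCLike 𝕜] [NormedAddCommGroup E]
    [InnerProductSpace 𝕜 E] : IsClosed {A : E →WOT[𝕜] E | A.toCLM.IsPositive} := by
  have continuous_inner_right (x y : E) : Continuous fun A : E →WOT[𝕜] E => ⟪x, A y⟫_𝕜 :=
    continuous_dual_apply y (innerSL 𝕜 x)
  have continuous_inner_left (x y : E) : Continuous fun A : E →WOT[𝕜] E => ⟪A x, y⟫_𝕜 := by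
    simpa only [Function.comp_def, inner_conj_symm] using
      RCLike.continuous_conj.comp (continuous_inner_right y x)
  simp only [ContinuousLinearMap.isPositive_iff, LinearMap.IsSymmetric, Set.ofPred_and,
    Set.ofPred_forall]
  exact (isClosed_iInter fun x => isClosed_iInter fun y =>
    isClosed_eq (continuous_inner_left x y) (continuous_inner_right x y)).inter
      (isClosed_iInter fun x => isClosed_le continuous_const (continuous_inner_left x x))

section TwistedPositiveDefinite

variable {𝔥 : Type*} [SeminormedAddCommGroup 𝔥] [InnerProductSpace ℂ 𝔥]

/-- The operator whose positivity is the `ε`-twisted positive definiteness condition on `F` at the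
points `η j` with operator coefficients `𝔱 j`; the real parameter `ε` enters only through the
phases. -/
def twistedSum {J : Type*} [Fintype J] (ε : ℝ) (F : 𝔥 → ℋ →L[ℂ] ℋ) (η : J → 𝔥)
    (𝔱 : J → ℋ →L[ℂ] ℋ) : ℋ →L[ℂ] ℋ :=
  ∑ j, ∑ k, exp (I * (ε : ℂ) * ((⟪η j, η k⟫_ℂ).im : ℂ)) • (𝔱 j * F (η j - η k) * star (𝔱 k))

/-- The `ε`-twisted complete positive definiteness satisfied by Fourier transforms of quantum
states; complete positive definiteness is the case `ε = 0`. Finite families are indexed by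
`Fin J`. -/
def IsTwistedCompletelyPositiveDefinite (ε : ℝ) (F : 𝔥 → ℋ →L[ℂ] ℋ) : Prop :=
  ∀ (J : ℕ) (η : Fin J → 𝔥) (𝔱 : Fin J → ℋ →L[ℂ] ℋ), (twistedSum ε F η 𝔱).IsPositive

theorem twistedSum_zero {J : Type*} [Fintype J] (F : 𝔥 → ℋ →L[ℂ] ℋ) (η : J → 𝔥)
    (𝔱 : J → ℋ →L[ℂ] ℋ) :
    twistedSum 0 F η 𝔱 = ∑ j, ∑ k, 𝔱 j * F (η j - η k) * star (𝔱 k) := by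
  simp [twistedSum]

variable {α : Type*} {l : Filter α} {ε : α → ℝ} {ε₀ : ℝ} {F : α → 𝔥 → ℋ →L[ℂ] ℋ}
  {F₀ : 𝔥 → ℋ →L[ℂ] ℋ}

theorem tendsto_ofCLM_twistedSum {J : Type*} [Fintype J] (hε : Tendsto ε l (𝓝 ε₀))
    (hF : ∀ η, Tendsto (fun n => ofCLM (F n η)) l (𝓝 (ofCLM (F₀ η))))
    (η : J → 𝔥) (𝔱 : J → ℋ →L[ℂ] ℋ) :
    Tendsto (fun n => ofCLM (twistedSum (ε n) (F n) η 𝔱)) l (𝓝 (ofCLM (twistedSum ε₀ F₀ η 𝔱))) := by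
  simp only [twistedSum, ofCLM_sum, ofCLM_smul, ofCLM_mul]
  refine tendsto_finsetSum _ fun j _ => tendsto_finsetSum _ fun k _ => ?_
  have continuous_phase : Continuous fun r : ℝ => exp (I * (r : ℂ) * ((⟪η j, η k⟫_ℂ).im : ℂ)) := by
    fun_prop
  exact ((continuous_phase.tendsto ε₀).comp hε).smul (((hF _).const_mul _).mul_const _)

theorem completely_positive_definite_of_twisted_limit_general [l.NeBot]
    (hε : Tendsto ε l (𝓝 ε₀))
    (hF : ∀ η, Tendsto (fun n => ofCLM (F n η)) l (𝓝 (ofCLM (F₀ η))))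
    (htwisted : ∀ᶠ n in l, IsTwistedCompletelyPositiveDefinite (ε n) (F n)) :
    IsTwistedCompletelyPositiveDefinite ε₀ F₀ := fun J η 𝔱 =>
  isClosed_setOf_isPositive_toCLM.mem_of_tendsto (tendsto_ofCLM_twistedSum hε hF η 𝔱)
    (htwisted.mono fun _ hn => hn J η 𝔱)

end TwistedPositiveDefinite

/-- If trace-class-valued maps `F_n` converge to `F` pointwise in the weak-*
sense (tested against compact operators), `ε_n → 0`, and each `F_n` is `ε_n`-twisted completely
positive definite, then `F` is completely positive definite. -/
theorem completely_positive_definite_of_twisted_limit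
    {𝔥 : Type*} [NormedAddCommGroup 𝔥] [InnerProductSpace ℂ 𝔥] [CompleteSpace 𝔥]
    [SecondCountableTopology 𝔥] [SecondCountableTopology ℋ]
    {ι : Type*} (e : HilbertBasis ι ℂ ℋ)
    (ε : ℕ → ℝ) (hε : Filter.Tendsto ε Filter.atTop (nhds 0))
    (F : ℕ → 𝔥 → (ℋ →L[ℂ] ℋ)) (F₀ : 𝔥 → (ℋ →L[ℂ] ℋ))
    (hFtc : ∀ (n : ℕ) (η : 𝔥), IsTraceClass e (F n η))
    (hF₀tc : ∀ η : 𝔥, IsTraceClass e (F₀ η))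
    (hconv : ∀ (η : 𝔥) (𝔨 : ℋ →L[ℂ] ℋ), IsCompactOperator 𝔨 →
      Filter.Tendsto (fun n => traceC e (F n η * 𝔨)) Filter.atTop
        (nhds (traceC e (F₀ η * 𝔨))))
    (htwisted : ∀ (n : ℕ) (J : ℕ) (η : Fin J → 𝔥) (𝔱 : Fin J → (ℋ →L[ℂ] ℋ)),
      (∑ j : Fin J, ∑ k : Fin J,
        Complex.exp (Complex.I * (ε n : ℂ) * ((⟪η j, η k⟫_ℂ).im : ℂ)) •
          (𝔱 j * F n (η j - η k) * star (𝔱 k))).IsPositive) :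
    ∀ (J : ℕ) (η : Fin J → 𝔥) (𝔱 : Fin J → (ℋ →L[ℂ] ℋ)),
      (∑ j : Fin J, ∑ k : Fin J,
        𝔱 j * F₀ (η j - η k) * star (𝔱 k)).IsPositive := by
  simpa only [IsTwistedCompletelyPositiveDefinite, twistedSum_zero] using
    completely_positive_definite_of_twisted_limit_general hε
      (fun η => tendsto_ofCLM_of_tendsto_traceC_mul_compact e (hconv η)) (.of_forall htwisted)
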